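/- Intertwining relation: let n ≥ 1, t > 0, let x ∈ W^{n+1} have strictly increasing coordinates, let (x',y') ∈ W^{n+1,n} with x' having strictly increasing coordinates and y' having strictly increasing coordinates. Then ∫_{W^n(x)} λ^n(x,y) q^{n,+}_t((x,y),(x',y')) dy = p^{n+1,+}_t(x,x') λ^n(x',y'), where the integrand is interpreted via the division-free identity λ^n(x,y) q^{n,+}_t((x,y),(x',y')) = n! (h_n(y')/h_{n+1}(x)) q^n_t((x,y),(x',y')). -/

import Mathlib

open MeasureTheory Real

/-- The centered Gaussian density with variance `t`. -/
noncomputable def gauss (t y : ℝ) : ℝ :=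
  (Real.sqrt (2 * Real.pi * t))⁻¹ * Real.exp (-y ^ 2 / (2 * t))

/-- The Gaussian cumulative distribution function `Φ_t`. -/
noncomputable def gaussCDF (t y : ℝ) : ℝ := ∫ z in Set.Iic y, gauss t z

/-- The derivative `φ'_t` of the Gaussian density. -/
noncomputable def gaussDeriv (t y : ℝ) : ℝ :=
  -y / Real.sqrt (2 * Real.pi * t ^ 3) * Real.exp (-y ^ 2 / (2 * t))

/-- The kernel `q^n_t((x,y),(x',y'))`, a `(2n+1)×(2n+1)` block determinant. -/
noncomputable def qKer (n : ℕ) (t : ℝ) (x x' : Fin (n + 1) → ℝ) (y y' : Fin n → ℝ) : ℝ :=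
  Matrix.det (Matrix.fromBlocks
    (Matrix.of fun i j : Fin (n + 1) => gauss t (x' j - x i))
    (Matrix.of fun (i : Fin (n + 1)) (j : Fin n) =>
      gaussCDF t (y' j - x i) - (if (i : ℕ) ≤ (j : ℕ) then (1 : ℝ) else 0))
    (Matrix.of fun (i : Fin n) (j : Fin (n + 1)) => gaussDeriv t (x' j - y i))
    (Matrix.of fun i j : Fin n => gauss t (y' j - y i)))

/-- The Karlin–McGregor kernel `p^m_t(x,x') = det{φ_t(x'_j − x_i)}`. -/
noncomputable def pKer (m : ℕ) (t : ℝ) (x x' : Fin m → ℝ) : ℝ :=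
  Matrix.det (Matrix.of fun i j : Fin m => gauss t (x' j - x i))

/-- The interlacing region `W^n(x) = {y : x_1 ≤ y_1 ≤ x_2 ≤ … ≤ y_n ≤ x_{n+1}}`. -/
def WintAt (n : ℕ) (x : Fin (n + 1) → ℝ) : Set (Fin n → ℝ) :=
  {y | ∀ i : Fin n, x i.castSucc ≤ y i ∧ y i ≤ x i.succ}

/-- The Vandermonde product `h_m(z) = ∏_{i<j} (z_j − z_i)`. -/
noncomputable def vand (m : ℕ) (z : Fin m → ℝ) : ℝ :=
  ∏ j : Fin m, ∏ i ∈ Finset.Iio j, (z j - z i)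

/-!
Row `y_i` of the determinant `q^n_t((x,y),(x',y'))` depends on `y` only through `y_i`, and `W^n(x)`
is the box `∏ [x_i, x_{i+1}]`, so integrating over `W^n(x)` integrates each of these rows over its
own interval. As `φ'_t` and `φ_t` are the derivatives of `φ_t` and `Φ_t`, row `y_i` becomes the
difference of rows `x_i` and `x_{i+1}`, except that in the right-hand block the differences of the
indicators `1{j ≥ i}` are missing. These form the identity matrix, so row reduction leaves a block
triangular matrix with diagonal blocks `(φ_t(x'_j − x_i))` and `1`.
-/

section IntegralDet

variable {m n : Type*} [Fintype m] [Fintype n] [DecidableEq m] [DecidableEq n]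
  {𝕜 : Type*} [RCLike 𝕜] {X : n → Type*} [∀ i, MeasurableSpace (X i)]
  {μ : ∀ i, Measure (X i)} [∀ i, SigmaFinite (μ i)]

theorem integral_det_fromRows (A : Matrix m (m ⊕ n) 𝕜) {f : ∀ i, m ⊕ n → X i → 𝕜}
    (hf : ∀ i j, Integrable (f i j) (μ i)) :
    ∫ y, (Matrix.fromRows A (Matrix.of fun i j => f i j (y i))).det ∂Measure.pi μ
      = (Matrix.fromRows A (Matrix.of fun i j => ∫ z, f i j z ∂μ i)).det := by
  -- Transposing makes the Leibniz formula range over rows, which are what the variables index.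
  simp only [← Matrix.det_transpose (Matrix.fromRows _ _), Matrix.det_apply',
    Matrix.transpose_apply, Fintype.prod_sum_type, Matrix.fromRows_apply_inl,
    Matrix.fromRows_apply_inr, Matrix.of_apply]
  have integrable_prod (σ : Equiv.Perm (m ⊕ n)) :
      Integrable (fun y : ∀ i, X i => ∏ i, f i (σ (.inr i)) (y i)) (Measure.pi μ) :=
    .fintype_prod_dep fun i => hf i (σ (.inr i))
  rw [integral_finsetSum _ fun σ _ => ((integrable_prod σ).const_mul _).const_mul _]
  simp only [integral_const_mul, integral_fintype_prod_eq_prod fun i => f i _]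

theorem integral_det_fromBlocks (A : Matrix m m 𝕜) (B : Matrix m n 𝕜)
    {c : ∀ i, m → X i → 𝕜} {d : ∀ i, n → X i → 𝕜}
    (hc : ∀ i j, Integrable (c i j) (μ i)) (hd : ∀ i j, Integrable (d i j) (μ i)) :
    ∫ y, (Matrix.fromBlocks A B (Matrix.of fun i j => c i j (y i))
        (Matrix.of fun i j => d i j (y i))).det ∂Measure.pi μ
      = (Matrix.fromBlocks A B (Matrix.of fun i j => ∫ z, c i j z ∂μ i)
        (Matrix.of fun i j => ∫ z, d i j z ∂μ i)).det := by
  convert integral_det_fromRows (Matrix.fromCols A B) (f := fun i => Sum.elim (c i) (d i))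
    (fun i => Sum.rec (hc i) (hd i)) with y
  all_goals ext (i | i) (j | j) <;> rfl

end IntegralDet

section BlockDet

theorem det_fromBlocks_mul_mul_add {m n R : Type*} [Fintype m] [Fintype n] [DecidableEq m]
    [DecidableEq n] [CommRing R] (A : Matrix m m R) (B : Matrix m n R) (L : Matrix n m R)
    (D : Matrix n n R) :
    (Matrix.fromBlocks A B (L * A) (L * B + D)).det = A.det * D.det := by
  have factor : Matrix.fromBlocks A B (L * A) (L * B + D)
      = Matrix.fromBlocks 1 0 L 1 * Matrix.fromBlocks A B 0 D := by
    simp [Matrix.fromBlocks_multiply]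
  rw [factor, Matrix.det_mul, Matrix.det_fromBlocks_zero₁₂, Matrix.det_fromBlocks_zero₂₁,
    Matrix.det_one, Matrix.det_one, one_mul, one_mul]

variable (n : ℕ) (R : Type*) [Ring R]

/-- The matrix of the difference operator `v ↦ (v_i − v_{i+1})_i`, with the sign that makes it a
left inverse of `upperStep`. -/
def consecutiveDiff : Matrix (Fin n) (Fin (n + 1)) R :=
  Matrix.of fun i k => (if k = i.castSucc then 1 else 0) - (if k = i.succ then 1 else 0)

/-- The indicator matrix `1{j ≥ i}` in the upper right block of `qKer`. -/
def upperStep : Matrix (Fin (n + 1)) (Fin n) R :=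
  Matrix.of fun i j => if (i : ℕ) ≤ j then 1 else 0

variable {n R}

theorem consecutiveDiff_mul_apply {l : Type*} (M : Matrix (Fin (n + 1)) l R) (i : Fin n) (j : l) :
    (consecutiveDiff n R * M) i j = M i.castSucc j - M i.succ j := by
  simp [consecutiveDiff, Matrix.mul_apply, sub_mul, Finset.sum_sub_distrib]

theorem consecutiveDiff_mul_upperStep : consecutiveDiff n R * upperStep n R = 1 := by
  ext i j
  simp only [consecutiveDiff_mul_apply, upperStep, Matrix.of_apply, Matrix.one_apply, Fin.ext_iff,
    Fin.val_castSucc, Fin.val_succ]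
  split_ifs <;> first | omega | simp

theorem det_fromBlocks_sub_upperStep {R : Type*} [CommRing R]
    (A : Matrix (Fin (n + 1)) (Fin (n + 1)) R) (F : Matrix (Fin (n + 1)) (Fin n) R) :
    (Matrix.fromBlocks A (F - upperStep n R) (consecutiveDiff n R * A)
      (consecutiveDiff n R * F)).det = A.det := by
  have lower_right : consecutiveDiff n R * F
      = consecutiveDiff n R * (F - upperStep n R) + 1 := by
    rw [Matrix.mul_sub, consecutiveDiff_mul_upperStep, sub_add_cancel]
  rw [lower_right, det_fromBlocks_mul_mul_add, Matrix.det_one, mul_one]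

end BlockDet

section Gauss

theorem continuous_gauss (t : ℝ) : Continuous (gauss t) := by
  unfold gauss
  fun_prop

theorem continuous_gaussDeriv (t : ℝ) : Continuous (gaussDeriv t) := by
  unfold gaussDeriv
  fun_prop

theorem setIntegral_Icc_comp_sub_left {E : Type*} [NormedAddCommGroup E] [NormedSpace ℝ E]
    (f : ℝ → E) (c : ℝ) {a b : ℝ} (hab : a ≤ b) :
    ∫ z in Set.Icc a b, f (c - z) = ∫ z in (c - b)..(c - a), f z := by
  rw [integral_Icc_eq_integral_Ioc, ← intervalIntegral.integral_of_le hab,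
    intervalIntegral.integral_comp_sub_left]

variable {t : ℝ}

theorem hasDerivAt_gauss (ht : 0 < t) (y : ℝ) : HasDerivAt (gauss t) (gaussDeriv t y) y := by
  have sqrt_cube : √(2 * π * t ^ 3) = t * √(2 * π * t) := by
    rw [show 2 * π * t ^ 3 = t ^ 2 * (2 * π * t) by ring, sqrt_mul (by positivity), sqrt_sq ht.le]
  have exponent : HasDerivAt (fun y : ℝ => -y ^ 2 / (2 * t)) (-(2 * y) / (2 * t)) y := by
    simpa using ((hasDerivAt_pow 2 y).neg).div_const (2 * t)
  refine (exponent.exp.const_mul (√(2 * π * t))⁻¹).congr_deriv ?_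
  rw [gaussDeriv, sqrt_cube]
  field_simp

theorem integrable_gauss (ht : 0 ≤ t) : Integrable (gauss t) := by
  have gauss_eq : gauss t = ProbabilityTheory.gaussianPDFReal 0 t.toNNReal := by
    ext y
    simp only [gauss, ProbabilityTheory.gaussianPDFReal, sub_zero, coe_toNNReal _ ht]
  exact gauss_eq ▸ ProbabilityTheory.integrable_gaussianPDFReal 0 t.toNNReal

theorem setIntegral_Icc_gaussDeriv_sub (ht : 0 < t) (c : ℝ) {a b : ℝ} (hab : a ≤ b) :
    ∫ z in Set.Icc a b, gaussDeriv t (c - z) = gauss t (c - a) - gauss t (c - b) := by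
  rw [setIntegral_Icc_comp_sub_left _ c hab]
  exact intervalIntegral.integral_eq_sub_of_hasDerivAt (fun y _ => hasDerivAt_gauss ht y)
    ((continuous_gaussDeriv t).intervalIntegrable _ _)

theorem setIntegral_Icc_gauss_sub (ht : 0 ≤ t) (c : ℝ) {a b : ℝ} (hab : a ≤ b) :
    ∫ z in Set.Icc a b, gauss t (c - z) = gaussCDF t (c - a) - gaussCDF t (c - b) := by
  rw [setIntegral_Icc_comp_sub_left _ c hab]
  exact (intervalIntegral.integral_Iic_sub_Iic (integrable_gauss ht).integrableOn
    (integrable_gauss ht).integrableOn).symm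

end Gauss

theorem WintAt_eq_pi_Icc (n : ℕ) (x : Fin (n + 1) → ℝ) :
    WintAt n x = Set.univ.pi fun i => Set.Icc (x i.castSucc) (x i.succ) := by
  ext y
  simp only [WintAt, Set.mem_ofPred_eq, Set.mem_univ_pi, Set.mem_Icc]

theorem vand_ne_zero {m : ℕ} {z : Fin m → ℝ} (hz : Function.Injective z) : vand m z ≠ 0 :=
  Finset.prod_ne_zero_iff.2 fun _ _ => Finset.prod_ne_zero_iff.2 fun _ hi =>
    sub_ne_zero.2 (hz.ne (Finset.mem_Iio.1 hi).ne')

theorem setIntegral_WintAt_qKer {n : ℕ} {t : ℝ} (ht : 0 < t) {x : Fin (n + 1) → ℝ}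
    (hx : Monotone x) (x' : Fin (n + 1) → ℝ) (y' : Fin n → ℝ) :
    ∫ y in WintAt n x, qKer n t x x' y y' = pKer (n + 1) t x x' := by
  have hle (i : Fin n) : x i.castSucc ≤ x i.succ := hx i.castSucc_lt_succ.le
  let P : Matrix (Fin (n + 1)) (Fin (n + 1)) ℝ := Matrix.of fun i j => gauss t (x' j - x i)
  let F : Matrix (Fin (n + 1)) (Fin n) ℝ := Matrix.of fun i j => gaussCDF t (y' j - x i)
  have integral_deriv_rows : (Matrix.of fun (i : Fin n) j =>
      ∫ z in Set.Icc (x i.castSucc) (x i.succ), gaussDeriv t (x' j - z))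
        = consecutiveDiff n ℝ * P := by
    ext i j
    simp [P, consecutiveDiff_mul_apply, setIntegral_Icc_gaussDeriv_sub ht _ (hle i)]
  have integral_density_rows : (Matrix.of fun (i : Fin n) j =>
      ∫ z in Set.Icc (x i.castSucc) (x i.succ), gauss t (y' j - z)) = consecutiveDiff n ℝ * F := by
    ext i j
    simp [F, consecutiveDiff_mul_apply, setIntegral_Icc_gauss_sub ht.le _ (hle i)]
  calc ∫ y in WintAt n x, qKer n t x x' y y'
      = ∫ y, (Matrix.fromBlocks P (F - upperStep n ℝ)
          (Matrix.of fun i j => gaussDeriv t (x' j - y i))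
          (Matrix.of fun i j => gauss t (y' j - y i))).det
          ∂Measure.pi fun i => volume.restrict (Set.Icc (x i.castSucc) (x i.succ)) := by
        rw [WintAt_eq_pi_Icc, volume_pi, Measure.restrict_pi_pi]
        rfl
    _ = (Matrix.fromBlocks P (F - upperStep n ℝ) (consecutiveDiff n ℝ * P)
          (consecutiveDiff n ℝ * F)).det := by
        rw [integral_det_fromBlocks P (F - upperStep n ℝ)
          (c := fun _ j z => gaussDeriv t (x' j - z)) (d := fun _ j z => gauss t (y' j - z))
          (fun _ _ => ((continuous_gaussDeriv t).comp (continuous_sub_left _)).integrableOn_Icc)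
          (fun _ _ => ((continuous_gauss t).comp (continuous_sub_left _)).integrableOn_Icc),
          integral_deriv_rows, integral_density_rows]
    _ = pKer (n + 1) t x x' := det_fromBlocks_sub_upperStep P F

theorem stmt6_general (n : ℕ) {t : ℝ} (ht : 0 < t) {x x' : Fin (n + 1) → ℝ} (y' : Fin n → ℝ)
    (hx : StrictMono x) (hx' : Function.Injective x') :
    ∫ y in WintAt n x,
        (Nat.factorial n : ℝ) * (vand n y' / vand (n + 1) x) * qKer n t x x' y y'
      = (vand (n + 1) x' / vand (n + 1) x) * pKer (n + 1) t x x'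
        * ((Nat.factorial n : ℝ) * vand n y' / vand (n + 1) x') := by
  have hvand : vand (n + 1) x' ≠ 0 := vand_ne_zero hx'
  rw [integral_const_mul, setIntegral_WintAt_qKer ht hx.monotone]
  field_simp

/-- Intertwining relation:
`∫_{W^n(x)} λ^n(x,y) q^{n,+}_t((x,y),(x',y')) dy = p^{n+1,+}_t(x,x') λ^n(x',y')`,
with the integrand written in the division-free form
`n! (h_n(y')/h_{n+1}(x)) q^n_t((x,y),(x',y'))`. -/
theorem stmt6 (n : ℕ) (hn : 1 ≤ n) (t : ℝ) (ht : 0 < t)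
    (x x' : Fin (n + 1) → ℝ) (y' : Fin n → ℝ)
    (hx : StrictMono x) (hx' : StrictMono x') (hy' : StrictMono y')
    (hx'y' : ∀ i : Fin n, x' i.castSucc ≤ y' i ∧ y' i ≤ x' i.succ) :
    ∫ y in WintAt n x,
        (Nat.factorial n : ℝ) * (vand n y' / vand (n + 1) x) * qKer n t x x' y y'
      = (vand (n + 1) x' / vand (n + 1) x) * pKer (n + 1) t x x'
        * ((Nat.factorial n : ℝ) * vand n y' / vand (n + 1) x') :=
  stmt6_general n ht y' hx hx'.injective
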